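/- Let λ > 0, let c : ℝ → ℝ be C¹ with c(u) > 0, and let u be a C³ function on an open subset U of ℝ² satisfying equation (E2): u_{tt} − c(u)² u_{xx} − 2λ c(u) c'(u) (u_x)² = 0. Let Y be a C² function on U with Y_t + c(u) Y_x = 0 and Y_x < 0 on U. Define R := u_t + c(u) u_x, S := u_t − c(u) u_x, and q := (1 + S²)^{1/(2λ)} / (−Y_x). Then pointwise: q_t + c(u) q_x = −(c'(u)/(2 c(u))) · ((1 + S²)^{1/(2λ)−1} / (−Y_x)) · [ ((λ−1)/λ) R S² − ((λ−1)/λ) R² S − R + S ]. -/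

import Mathlib

open Real

/-- Partial derivative in the spatial direction `x` (first coordinate). -/
noncomputable def px (φ : ℝ × ℝ → ℝ) (p : ℝ × ℝ) : ℝ := fderiv ℝ φ p (1, 0)

/-- Partial derivative in the time direction `t` (second coordinate). -/
noncomputable def pt (φ : ℝ × ℝ → ℝ) (p : ℝ × ℝ) : ℝ := fderiv ℝ φ p (0, 1)

/-!
Let `D = ∂_t + c(u) ∂_x` be the derivative along forward characteristics. For any coefficient `a`,
symmetry of second derivatives gives two identities:

* `(∂_t + a ∂_x) (φ_t - a φ_x) = φ_tt - a² φ_xx - (a_t + a a_x) φ_x`;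
* `∂_x (φ_t + a φ_x) = (∂_t + a ∂_x) φ_x + a_x φ_x`.

With `a = c(u)`, the first one turns (E2) into `D S = c' u_x (2λ c u_x - R)`, and the second one
turns `D Y = 0` into `D Y_x = -c' u_x Y_x`. Since `D q` is a combination of `D S` and `D Y_x`, both
proportional to `u_x = (R - S) / (2c)`, the factor `R - S` splits off:
`D q = (c' / (2c)) ((1 + S²) ^ (1/(2λ) - 1) / (-Y_x)) (R - S) (((λ - 1)/λ) R S + 1)`.
-/

open Filter Topology

section DirectionalDerivatives

variable {𝕜 E F : Type*} [NontriviallyNormedField 𝕜] [NormedAddCommGroup E] [NormedSpace 𝕜 E]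
  [NormedAddCommGroup F] [NormedSpace 𝕜 F]

lemma differentiableAt_fderiv_apply {f : E → F} {x : E} (hf : ContDiffAt 𝕜 2 f x) (v : E) :
    DifferentiableAt 𝕜 (fun y => fderiv 𝕜 f y v) x :=
  ((hf.fderiv_right (m := 1) (by norm_num)).differentiableAt one_ne_zero).clm_apply
    (differentiableAt_const v)

lemma fderiv_fderiv_apply {f : E → F} {x : E} (hf : DifferentiableAt 𝕜 (fderiv 𝕜 f) x)
    (v w : E) :
    fderiv 𝕜 (fun y => fderiv 𝕜 f y v) x w = fderiv 𝕜 (fderiv 𝕜 f) x w v := by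
  simp [fderiv_clm_apply hf (differentiableAt_const v)]

lemma fderiv_fderiv_apply_comm {n : WithTop ℕ∞} {f : E → F} {x : E} (hf : ContDiffAt 𝕜 n f x)
    (hn : minSmoothness 𝕜 2 ≤ n) (v w : E) :
    fderiv 𝕜 (fun y => fderiv 𝕜 f y v) x w = fderiv 𝕜 (fun y => fderiv 𝕜 f y w) x v := by
  have hf' : DifferentiableAt 𝕜 (fderiv 𝕜 f) x :=
    ((hf.of_le (le_minSmoothness.trans hn)).fderiv_right (m := 1) (by norm_num)).differentiableAt
      one_ne_zero
  rw [fderiv_fderiv_apply hf', fderiv_fderiv_apply hf']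
  exact hf.isSymmSndFDerivAt hn w v

lemma fderiv_comp_apply_eq_deriv_mul {c : 𝕜 → 𝕜} {u : E → 𝕜} {x : E}
    (hc : DifferentiableAt 𝕜 c (u x)) (hu : DifferentiableAt 𝕜 u x) (v : E) :
    fderiv 𝕜 (fun y => c (u y)) x v = deriv c (u x) * fderiv 𝕜 u x v :=
  congrArg (· v) (hc.hasDerivAt.comp_hasFDerivAt x hu.hasFDerivAt).fderiv

end DirectionalDerivatives

lemma fderiv_rpow_div_apply {E : Type*} [NormedAddCommGroup E] [NormedSpace ℝ E] {f g : E → ℝ}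
    {x : E} (hf : DifferentiableAt ℝ f x) (hg : DifferentiableAt ℝ g x) (hf₀ : f x ≠ 0)
    (hg₀ : g x ≠ 0) (a : ℝ) (v : E) :
    fderiv ℝ (fun y => f y ^ a / g y) x v
      = f x ^ (a - 1) / g x * (a * fderiv ℝ f x v - f x * fderiv ℝ g x v / g x) := by
  have hpow : HasFDerivAt (fun y => f y ^ a) _ x := hf.hasFDerivAt.rpow_const (Or.inl hf₀)
  have hinv : HasFDerivAt (fun y => (g y)⁻¹) _ x :=
    (hasDerivAt_inv hg₀).comp_hasFDerivAt x hg.hasFDerivAt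
  have hsplit : f x ^ a = f x ^ (a - 1) * f x := by
    rw [rpow_sub_one hf₀, div_mul_cancel₀ _ hf₀]
  simp only [div_eq_mul_inv]
  rw [(hpow.fun_mul hinv).fderiv]
  simp only [add_apply, smul_apply, smul_eq_mul, hsplit]
  field_simp
  ring

lemma pt_px_comm {φ : ℝ × ℝ → ℝ} {z : ℝ × ℝ} (hφ : ContDiffAt ℝ 2 φ z) :
    pt (px φ) z = px (pt φ) z :=
  fderiv_fderiv_apply_comm hφ (by simp) _ _

/-- The transport operator `∂_t + a ∂_x` with variable speed `a`; for `a = c ∘ u` it is the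
derivative along the forward characteristics of (E2). -/
noncomputable def transportDeriv (a φ : ℝ × ℝ → ℝ) (p : ℝ × ℝ) : ℝ := pt φ p + a p * px φ p

section Transport

variable {a φ : ℝ × ℝ → ℝ} {z : ℝ × ℝ}

lemma transportDeriv_eq_fderiv (a φ : ℝ × ℝ → ℝ) (z : ℝ × ℝ) :
    transportDeriv a φ z = fderiv ℝ φ z (a z, 1) := by
  have hdir : ((a z, 1) : ℝ × ℝ) = (0, 1) + a z • (1, 0) := by simp
  rw [hdir, map_add, map_smul]
  rfl

lemma px_transportDeriv (ha : DifferentiableAt ℝ a z) (hφ : ContDiffAt ℝ 2 φ z) :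
    px (transportDeriv a φ) z = transportDeriv a (px φ) z + px a z * px φ z := by
  have ht : DifferentiableAt ℝ (pt φ) z := differentiableAt_fderiv_apply hφ _
  have hx : DifferentiableAt ℝ (px φ) z := differentiableAt_fderiv_apply hφ _
  have hexpand : px (transportDeriv a φ) z
      = px (pt φ) z + (a z * px (px φ) z + px φ z * px a z) := by
    change fderiv ℝ (fun p => pt φ p + a p * px φ p) z (1, 0) = _
    rw [fderiv_fun_add ht (ha.fun_mul hx), fderiv_fun_mul ha hx]
    rfl
  rw [hexpand, transportDeriv, pt_px_comm hφ]
  ring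

lemma transportDeriv_pt_sub_mul_px (ha : DifferentiableAt ℝ a z) (hφ : ContDiffAt ℝ 2 φ z) :
    transportDeriv a (fun p => pt φ p - a p * px φ p) z
      = pt (pt φ) z - a z ^ 2 * px (px φ) z - transportDeriv a a z * px φ z := by
  have ht : DifferentiableAt ℝ (pt φ) z := differentiableAt_fderiv_apply hφ _
  have hx : DifferentiableAt ℝ (px φ) z := differentiableAt_fderiv_apply hφ _
  have hexpand : transportDeriv a (fun p => pt φ p - a p * px φ p) z
      = transportDeriv a (pt φ) z
        - (a z * transportDeriv a (px φ) z + px φ z * transportDeriv a a z) := by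
    simp only [transportDeriv_eq_fderiv]
    rw [fderiv_fun_sub ht (ha.fun_mul hx), fderiv_fun_mul ha hx]
    rfl
  rw [hexpand]
  simp only [transportDeriv, pt_px_comm hφ]
  ring

end Transport

/-- The forward gradient variable `R = u_t + c(u) u_x`. -/
noncomputable def riemannPlus (c : ℝ → ℝ) (u : ℝ × ℝ → ℝ) (p : ℝ × ℝ) : ℝ :=
  pt u p + c (u p) * px u p

/-- The backward gradient variable `S = u_t - c(u) u_x`. -/
noncomputable def riemannMinus (c : ℝ → ℝ) (u : ℝ × ℝ → ℝ) (p : ℝ × ℝ) : ℝ :=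
  pt u p - c (u p) * px u p

/-- The quantity `q = (1 + S²) ^ (1/(2λ)) / (-Y_x)` attached to the forward characteristic
coordinate `Y`. -/
noncomputable def charDensity (lam : ℝ) (c : ℝ → ℝ) (u Y : ℝ × ℝ → ℝ) (p : ℝ × ℝ) : ℝ :=
  (1 + riemannMinus c u p ^ 2) ^ (1 / (2 * lam)) / (-px Y p)

section WaveEquation

variable {lam : ℝ} {c : ℝ → ℝ} {u Y : ℝ × ℝ → ℝ} {z : ℝ × ℝ}

lemma differentiableAt_riemannMinus (hc : DifferentiableAt ℝ c (u z)) (hu : ContDiffAt ℝ 2 u z) :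
    DifferentiableAt ℝ (riemannMinus c u) z :=
  (differentiableAt_fderiv_apply hu _).fun_sub
    ((hc.comp z (hu.differentiableAt two_ne_zero)).fun_mul (differentiableAt_fderiv_apply hu _))

lemma transportDeriv_riemannMinus (hc : DifferentiableAt ℝ c (u z)) (hu : ContDiffAt ℝ 2 u z)
    (hE2 : pt (pt u) z - c (u z) ^ 2 * px (px u) z
      - 2 * lam * c (u z) * deriv c (u z) * px u z ^ 2 = 0) :
    transportDeriv (fun p => c (u p)) (riemannMinus c u) z
      = deriv c (u z) * px u z * (2 * lam * c (u z) * px u z - riemannPlus c u z) := by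
  have hud : DifferentiableAt ℝ u z := hu.differentiableAt two_ne_zero
  have hspeed : transportDeriv (fun p => c (u p)) (fun p => c (u p)) z
      = deriv c (u z) * riemannPlus c u z := by
    rw [transportDeriv_eq_fderiv, fderiv_comp_apply_eq_deriv_mul hc hud,
      ← transportDeriv_eq_fderiv (fun p => c (u p))]
    rfl
  have hS := transportDeriv_pt_sub_mul_px (a := fun p => c (u p)) (hc.comp z hud) hu
  rw [hspeed] at hS
  refine hS.trans ?_
  linear_combination hE2

lemma transportDeriv_px_of_transportDeriv_eq_zero (hc : DifferentiableAt ℝ c (u z))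
    (hu : DifferentiableAt ℝ u z) (hY : ContDiffAt ℝ 2 Y z)
    (hchar : transportDeriv (fun p => c (u p)) Y =ᶠ[𝓝 z] 0) :
    transportDeriv (fun p => c (u p)) (px Y) z = -(deriv c (u z) * px u z * px Y z) := by
  have hcomm := px_transportDeriv (a := fun p => c (u p)) (hc.comp z hu) hY
  have hzero : px (transportDeriv (fun p => c (u p)) Y) z = 0 := by
    simp [px, hchar.fderiv_eq]
  have hspeed : px (fun p => c (u p)) z = deriv c (u z) * px u z :=
    fderiv_comp_apply_eq_deriv_mul hc hu _
  rw [hzero, hspeed] at hcomm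
  linear_combination -hcomm

lemma transportDeriv_charDensity (lam : ℝ) (a : ℝ × ℝ → ℝ)
    (hS : DifferentiableAt ℝ (riemannMinus c u) z) (hYx : DifferentiableAt ℝ (px Y) z)
    (hYx₀ : px Y z ≠ 0) :
    transportDeriv a (charDensity lam c u Y) z
      = (1 + riemannMinus c u z ^ 2) ^ (1 / (2 * lam) - 1) / (-px Y z)
        * (riemannMinus c u z * transportDeriv a (riemannMinus c u) z / lam
          - (1 + riemannMinus c u z ^ 2) * transportDeriv a (px Y) z / px Y z) := by
  have hsq : ∀ v, fderiv ℝ (fun p => 1 + riemannMinus c u p ^ 2) z v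
      = 2 * riemannMinus c u z * fderiv ℝ (riemannMinus c u) z v := fun v => by
    simp [fderiv_fun_pow 2 hS]
  simp only [transportDeriv_eq_fderiv]
  refine (fderiv_rpow_div_apply ((hS.fun_pow 2).const_add 1) hYx.fun_neg (by positivity)
    (neg_ne_zero.2 hYx₀) _ _).trans ?_
  rw [hsq, fderiv_fun_neg, neg_apply]
  field_simp

theorem stmt17_general (hlam : lam ≠ 0) (hc : DifferentiableAt ℝ c (u z)) (hc₀ : c (u z) ≠ 0)
    (hu : ContDiffAt ℝ 2 u z) (hY : ContDiffAt ℝ 2 Y z)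
    (hE2 : pt (pt u) z - c (u z) ^ 2 * px (px u) z
      - 2 * lam * c (u z) * deriv c (u z) * px u z ^ 2 = 0)
    (hchar : transportDeriv (fun p => c (u p)) Y =ᶠ[𝓝 z] 0) (hYx : px Y z ≠ 0) :
    transportDeriv (fun p => c (u p)) (charDensity lam c u Y) z
      = -(deriv c (u z) / (2 * c (u z)))
        * ((1 + riemannMinus c u z ^ 2) ^ (1 / (2 * lam) - 1) / (-px Y z))
        * ((lam - 1) / lam * riemannPlus c u z * riemannMinus c u z ^ 2
          - (lam - 1) / lam * riemannPlus c u z ^ 2 * riemannMinus c u z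
          - riemannPlus c u z + riemannMinus c u z) := by
  have hux : px u z = (riemannPlus c u z - riemannMinus c u z) / (2 * c (u z)) := by
    rw [riemannPlus, riemannMinus]
    field_simp
    ring
  rw [transportDeriv_charDensity lam _ (differentiableAt_riemannMinus hc hu)
      (differentiableAt_fderiv_apply hY _) hYx,
    transportDeriv_riemannMinus hc hu hE2,
    transportDeriv_px_of_transportDeriv_eq_zero hc (hu.differentiableAt two_ne_zero) hY hchar, hux]
  field_simp
  ring

end WaveEquation

/-- let `u` be a `C³` solution of (E2)
`u_{tt} − c(u)² u_{xx} − 2λ c(u) c'(u) (u_x)² = 0`, `Y` a `C²` function with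
`Y_t + c(u) Y_x = 0` and `Y_x < 0`.  With `R := u_t + c(u)u_x`, `S := u_t − c(u)u_x`
and `q := (1+S²)^{1/(2λ)}/(−Y_x)`, one has
`q_t + c(u) q_x = −(c'/(2c)) ((1+S²)^{1/(2λ)−1}/(−Y_x)) [((λ−1)/λ)RS² − ((λ−1)/λ)R²S − R + S]`. -/
theorem stmt17 (lam : ℝ) (hlam : 0 < lam)
    (c : ℝ → ℝ) (hc : ContDiff ℝ 1 c) (hcpos : ∀ z : ℝ, 0 < c z)
    (U : Set (ℝ × ℝ)) (hU : IsOpen U) (u Y : ℝ × ℝ → ℝ)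
    (hu : ContDiffOn ℝ 3 u U) (hY : ContDiffOn ℝ 2 Y U)
    (hE2 : ∀ p ∈ U,
      pt (pt u) p - (c (u p)) ^ 2 * px (px u) p
        - 2 * lam * c (u p) * deriv c (u p) * (px u p) ^ 2 = 0)
    (hYchar : ∀ p ∈ U, pt Y p + c (u p) * px Y p = 0)
    (hYx : ∀ p ∈ U, px Y p < 0) :
    ∀ z ∈ U,
      pt (fun q => (1 + (pt u q - c (u q) * px u q) ^ 2) ^ (1/(2*lam)) / (-px Y q)) z
        + c (u z) * px (fun q =>
            (1 + (pt u q - c (u q) * px u q) ^ 2) ^ (1/(2*lam)) / (-px Y q)) z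
      = -(deriv c (u z) / (2 * c (u z))) *
          ((1 + (pt u z - c (u z) * px u z) ^ 2) ^ (1/(2*lam) - 1) / (-px Y z)) *
          (((lam - 1)/lam) * (pt u z + c (u z) * px u z)
              * (pt u z - c (u z) * px u z) ^ 2
            - ((lam - 1)/lam) * (pt u z + c (u z) * px u z) ^ 2
              * (pt u z - c (u z) * px u z)
            - (pt u z + c (u z) * px u z) + (pt u z - c (u z) * px u z)) := by
  intro z hz
  have hUz : U ∈ 𝓝 z := hU.mem_nhds hz
  exact stmt17_general hlam.ne' (hc.differentiable one_ne_zero _) (hcpos _).ne'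
    ((hu.contDiffAt hUz).of_le (by norm_num)) (hY.contDiffAt hUz) (hE2 z hz)
    (eventually_of_mem hUz hYchar) (hYx z hz).ne
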